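/- For any finite family B₁,…,B_p of real symmetric m×m matrices, (Σᵣ ‖Bᵣ‖²)² ≥ 2 Σ_{r<s} ‖[Bᵣ,Bₛ]‖², where ‖·‖ is the Frobenius norm. (The DDVV inequality in its equivalent algebraic matrix form, proved by Ge–Tang and Lu.) -/

import Mathlib

open Matrix Finset

/-- Frobenius norm squared of a real matrix. -/
def frob2 {m : ℕ} (M : Matrix (Fin m) (Fin m) ℝ) : ℝ :=
  ∑ i, ∑ j, (M i j) ^ 2

/-- Frobenius inner product. -/
def fip {m : ℕ} (M N : Matrix (Fin m) (Fin m) ℝ) : ℝ := ∑ i, ∑ j, M i j * N i j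

lemma frob2_eq_fip {m : ℕ} (M : Matrix (Fin m) (Fin m) ℝ) : frob2 M = fip M M := by
  simp [frob2, fip, sq]

lemma fip_eq_trace {m : ℕ} (M N : Matrix (Fin m) (Fin m) ℝ) : fip M N = (M * Nᵀ).trace := by
  simp [fip, Matrix.trace, Matrix.mul_apply]

lemma frob2_nonneg {m : ℕ} (M : Matrix (Fin m) (Fin m) ℝ) : 0 ≤ frob2 M :=
  Finset.sum_nonneg fun _ _ => Finset.sum_nonneg fun _ _ => sq_nonneg _

lemma frob2_smul {m : ℕ} (a : ℝ) (M : Matrix (Fin m) (Fin m) ℝ) :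
    frob2 (a • M) = a ^ 2 * frob2 M := by
  simp [frob2, mul_pow, Finset.mul_sum]

lemma frob2_neg_comm {m : ℕ} (M N : Matrix (Fin m) (Fin m) ℝ) :
    frob2 (M * N - N * M) = frob2 (N * M - M * N) := by
  unfold frob2
  refine Finset.sum_congr rfl fun i _ => Finset.sum_congr rfl fun j _ => ?_
  simp only [Matrix.sub_apply]
  ring

lemma frob2_eq_zero {m : ℕ} {M : Matrix (Fin m) (Fin m) ℝ} (h : frob2 M = 0) : M = 0 := by
  unfold frob2 at h
  ext i j
  have h1 := (Finset.sum_eq_zero_iff_of_nonneg (f := fun i => ∑ j, (M i j) ^ 2)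
    (fun _ _ => Finset.sum_nonneg fun _ _ => sq_nonneg _)).mp h i (Finset.mem_univ i)
  have h2 := (Finset.sum_eq_zero_iff_of_nonneg (f := fun j => (M i j) ^ 2)
    (fun _ _ => sq_nonneg _)).mp h1 j (Finset.mem_univ j)
  simpa using h2

lemma fip_conj {m : ℕ} (U M N : Matrix (Fin m) (Fin m) ℝ) (hU : Uᵀ * U = 1) :
    fip (U * M * Uᵀ) (U * N * Uᵀ) = fip M N := by
  rw [fip_eq_trace, fip_eq_trace]
  have : U * M * Uᵀ * (U * N * Uᵀ)ᵀ = U * (M * Nᵀ * Uᵀ) := by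
    simp only [Matrix.transpose_mul, Matrix.transpose_transpose]
    calc U * M * Uᵀ * (U * (Nᵀ * Uᵀ)) = U * M * (Uᵀ * U) * (Nᵀ * Uᵀ) := by
          simp only [Matrix.mul_assoc]
      _ = _ := by rw [hU]; simp only [Matrix.mul_assoc, Matrix.mul_one]
  rw [this, Matrix.trace_mul_comm, Matrix.mul_assoc, hU, Matrix.mul_one]

lemma exists_diag {n : ℕ} (G : Matrix (Fin n) (Fin n) ℝ) (hG : G.IsSymm) :
    ∃ (U : Matrix (Fin n) (Fin n) ℝ) (d : Fin n → ℝ), Uᵀ * U = 1 ∧ U * Uᵀ = 1 ∧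
      U * G * Uᵀ = Matrix.diagonal d := by
  have hH : G.IsHermitian := by
    rw [Matrix.IsHermitian, Matrix.conjTranspose_eq_transpose_of_trivial]; exact hG
  have h := hH.conjStarAlgAut_star_eigenvectorUnitary
  rw [Unitary.conjStarAlgAut_apply] at h
  have e : ∀ V : Matrix (Fin n) (Fin n) ℝ, star V = Vᵀ := fun V => by
    rw [Matrix.star_eq_conjTranspose, Matrix.conjTranspose_eq_transpose_of_trivial]
  have h1 := Unitary.coe_star_mul_self hH.eigenvectorUnitary
  have h2 := Unitary.coe_mul_star_self hH.eigenvectorUnitary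
  simp only [Unitary.coe_star, star_star, e] at h h1 h2
  refine ⟨(hH.eigenvectorUnitary : Matrix (Fin n) (Fin n) ℝ)ᵀ, hH.eigenvalues, ?_, ?_, ?_⟩
  · rw [Matrix.transpose_transpose]; exact h2
  · rw [Matrix.transpose_transpose]; exact h1
  · rw [Matrix.transpose_transpose]; simpa using h

/-- Rotation invariance. -/
lemma sum_sq_rot {n : ℕ} (U : Matrix (Fin n) (Fin n) ℝ) (hU : Uᵀ * U = 1) (v : Fin n → ℝ) :
    ∑ r, (∑ s, U r s * v s) ^ 2 = ∑ s, v s ^ 2 := by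
  have h : (U *ᵥ v) ⬝ᵥ (U *ᵥ v) = v ⬝ᵥ v := by
    rw [Matrix.dotProduct_mulVec, ← Matrix.mulVec_transpose, Matrix.mulVec_mulVec, hU,
      Matrix.one_mulVec]
  simpa [dotProduct, Matrix.mulVec, sq] using h

lemma sum_frob2_rot {m n : ℕ} (U : Matrix (Fin n) (Fin n) ℝ) (hU : Uᵀ * U = 1)
    (X : Fin n → Matrix (Fin m) (Fin m) ℝ) :
    ∑ r, frob2 (∑ t, U r t • X t) = ∑ t, frob2 (X t) := by
  unfold frob2
  rw [Finset.sum_comm, Finset.sum_comm (s := univ) (t := univ) (f := fun t i => ∑ j, (X t i j)^2)]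
  refine Finset.sum_congr rfl fun i _ => ?_
  rw [Finset.sum_comm, Finset.sum_comm (s := univ) (t := univ) (f := fun t j => (X t i j)^2)]
  refine Finset.sum_congr rfl fun j _ => ?_
  rw [← sum_sq_rot U hU (fun t => X t i j)]
  simp [Matrix.sum_apply]

/-- Star estimate. -/
lemma star_bound {n : ℕ} (l : Fin n → ℝ) (hl : ∑ i, l i ^ 2 ≤ 1) (i : Fin n)
    (J : Finset (Fin n)) (hi : i ∉ J) :
    ∑ j ∈ J, ((l i - l j) ^ 2 - 1) ≤ 1 := by
  have h1 : l i ^ 2 + ∑ j ∈ J, l j ^ 2 ≤ 1 := by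
    rw [← Finset.sum_insert (f := fun j => l j ^ 2) hi]
    exact le_trans (Finset.sum_le_sum_of_subset_of_nonneg (Finset.subset_univ _)
      (fun _ _ _ => sq_nonneg _)) hl
  have h2 : (∑ j ∈ J, l j) ^ 2 ≤ (J.card : ℝ) * ∑ j ∈ J, l j ^ 2 := sq_sum_le_card_mul_sum_sq
  have h3 : ∑ j ∈ J, ((l i - l j) ^ 2 - 1)
      = J.card * l i ^ 2 - 2 * l i * (∑ j ∈ J, l j) + ∑ j ∈ J, l j ^ 2 - J.card := by
    have : ∀ j ∈ J, (l i - l j) ^ 2 - 1 = l i ^ 2 - 2 * l i * l j + l j ^ 2 - 1 :=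
      fun j _ => by ring
    rw [Finset.sum_congr rfl this]
    simp [Finset.sum_add_distrib, Finset.sum_sub_distrib, Finset.mul_sum]
  have h4 : (0:ℝ) ≤ J.card := Nat.cast_nonneg _
  rw [h3]
  nlinarith [sq_nonneg (l i + ∑ j ∈ J, l j), mul_le_mul_of_nonneg_left h1 h4]

lemma two_sq_le {n : ℕ} (l : Fin n → ℝ) (hl : ∑ i, l i ^ 2 ≤ 1) (i j : Fin n) (h : i ≠ j) :
    l i ^ 2 + l j ^ 2 ≤ 1 := by
  rw [← Finset.sum_pair (f := fun j => l j ^ 2) h]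
  exact le_trans (Finset.sum_le_sum_of_subset_of_nonneg (Finset.subset_univ _)
      (fun _ _ _ => sq_nonneg _)) hl

lemma no_path {n : ℕ} (l : Fin n → ℝ) (hl : ∑ i, l i ^ 2 ≤ 1) (i j k : Fin n)
    (h : 1 < l i - l j) (h' : 1 < l j - l k) : False := by
  have hik : i ≠ k := by rintro rfl; linarith
  have := two_sq_le l hl i k hik
  nlinarith [sq_nonneg (l i + l k)]

lemma no_disj {n : ℕ} (l : Fin n → ℝ) (hl : ∑ i, l i ^ 2 ≤ 1) (i j k t : Fin n)
    (h : 1 < l i - l j) (h' : 1 < l k - l t) : i = k ∨ j = t := by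
  by_contra hc
  push Not at hc
  obtain ⟨h1, h2⟩ := hc
  have hij : i ≠ j := by rintro rfl; linarith
  have hkt : k ≠ t := by rintro rfl; linarith
  have hit : i ≠ t := by rintro rfl; exact no_path l hl k i j h' h
  have hjk : j ≠ k := by rintro rfl; exact no_path l hl i j t h h'
  have hs : l i ^ 2 + (l j ^ 2 + (l k ^ 2 + l t ^ 2)) ≤ 1 := by
    have : ∑ x ∈ ({i, j, k, t} : Finset (Fin n)), l x ^ 2
        = l i ^ 2 + (l j ^ 2 + (l k ^ 2 + l t ^ 2)) := by
      rw [Finset.sum_insert (by simp [*]), Finset.sum_insert (by simp [*]), Finset.sum_pair hkt]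
    rw [← this]
    exact le_trans (Finset.sum_le_sum_of_subset_of_nonneg (Finset.subset_univ _)
      (fun _ _ _ => sq_nonneg _)) hl
  nlinarith [sq_nonneg (l i + l j), sq_nonneg (l k + l t)]

lemma star_struct {n : ℕ} (l : Fin n → ℝ) (hl : ∑ i, l i ^ 2 ≤ 1) (i0 j0 : Fin n)
    (h0 : 1 < l i0 - l j0) :
    (∀ i j, 1 < l i - l j → i = i0) ∨ (∀ i j, 1 < l i - l j → j = j0) := by
  by_contra hc
  push Not at hc
  obtain ⟨⟨k, t, hkt, hk⟩, ⟨k', t', hkt', ht'⟩⟩ := hc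
  have a := no_disj l hl _ _ _ _ h0 hkt
  have b := no_disj l hl _ _ _ _ h0 hkt'
  have c := no_disj l hl _ _ _ _ hkt hkt'
  rcases a with a | a
  · exact hk a.symm
  rcases b with b | b
  · subst a; subst b
    rcases c with c | c
    · exact hk c
    · exact ht' c.symm
  · exact ht' b.symm

lemma scalar_bound {n : ℕ} (l : Fin n → ℝ) (hl : ∑ i, l i ^ 2 ≤ 1) :
    ∑ i, ∑ j, (if 1 < l i - l j then (l i - l j) ^ 2 - 1 else 0) ≤ 1 := by
  by_cases hex : ∃ i j, 1 < l i - l j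
  · obtain ⟨i0, j0, h0⟩ := hex
    rcases star_struct l hl i0 j0 h0 with h | h
    · rw [Finset.sum_eq_single i0]
      · rw [← Finset.sum_filter]
        exact star_bound l hl i0 _ (by simp)
      · intro i _ hi
        refine Finset.sum_eq_zero fun j _ => ?_
        rw [if_neg fun hh => hi (h i j hh)]
      · simp
    · rw [Finset.sum_comm, Finset.sum_eq_single j0]
      · rw [← Finset.sum_filter]
        have := star_bound l hl j0 (univ.filter fun i => 1 < l i - l j0) (by simp)
        refine le_trans (le_of_eq (Finset.sum_congr rfl fun i _ => by ring)) this
      · intro j _ hj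
        refine Finset.sum_eq_zero fun i _ => ?_
        rw [if_neg fun hh => hj (h i j hh)]
      · simp
  · push Not at hex
    rw [Finset.sum_eq_zero]
    · exact zero_le_one
    · intro i _
      refine Finset.sum_eq_zero fun j _ => ?_
      rw [if_neg (not_lt.mpr (hex i j))]

/-- Bessel's inequality for an off-diagonal entry. -/
lemma bessel_entry {m p : ℕ} (A : Fin p → Matrix (Fin m) (Fin m) ℝ) (hA : ∀ r, (A r).IsSymm)
    (horth : ∀ r s, r ≠ s → fip (A r) (A s) = 0) (hn : ∀ r, frob2 (A r) ≤ 1)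
    (i j : Fin m) (hij : i ≠ j) : 2 * ∑ r, (A r i j) ^ 2 ≤ 1 := by
  set S := ∑ r, (A r i j) ^ 2 with hS
  have hS0 : 0 ≤ S := Finset.sum_nonneg fun _ _ => sq_nonneg _
  set W : Matrix (Fin m) (Fin m) ℝ := ∑ r, (A r i j) • A r with hW
  have hWij : W i j = S := by simp [hW, hS, Matrix.sum_apply, sq]
  have hWji : W j i = S := by
    simp only [hW, hS, Matrix.sum_apply, sq, Matrix.smul_apply, smul_eq_mul]
    exact Finset.sum_congr rfl fun r _ => by rw [(hA r).apply i j]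
  have hlow : 2 * S ^ 2 ≤ frob2 W := by
    unfold frob2
    have h1 : ∑ x ∈ ({i, j} : Finset (Fin m)), ∑ y, W x y ^ 2 ≤ ∑ x, ∑ y, W x y ^ 2 :=
      Finset.sum_le_sum_of_subset_of_nonneg (Finset.subset_univ _)
        (fun _ _ _ => Finset.sum_nonneg fun _ _ => sq_nonneg _)
    rw [Finset.sum_pair hij] at h1
    have h2 : W i j ^ 2 ≤ ∑ y, W i y ^ 2 :=
      Finset.single_le_sum (f := fun y => W i y ^ 2) (fun _ _ => sq_nonneg _) (Finset.mem_univ j)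
    have h3 : W j i ^ 2 ≤ ∑ y, W j y ^ 2 :=
      Finset.single_le_sum (f := fun y => W j y ^ 2) (fun _ _ => sq_nonneg _) (Finset.mem_univ i)
    rw [hWij] at h2
    rw [hWji] at h3
    linarith
  have hup : frob2 W = ∑ r, (A r i j) ^ 2 * frob2 (A r) := by
    have e : frob2 W = ∑ r, ∑ s, (A r i j) * (A s i j) * fip (A r) (A s) := by
      have hl : ∀ (X : Matrix (Fin m) (Fin m) ℝ),
          fip W X = ∑ r, A r i j * fip (A r) X := by
        intro X
        simp only [fip_eq_trace, hW, Matrix.sum_mul, Matrix.trace_sum, Matrix.smul_mul,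
          Matrix.trace_smul, smul_eq_mul]
      have hr : ∀ (X : Matrix (Fin m) (Fin m) ℝ),
          fip X W = ∑ r, A r i j * fip X (A r) := by
        intro X
        simp only [fip_eq_trace, hW, Matrix.transpose_sum, Matrix.mul_sum, Matrix.trace_sum,
          Matrix.transpose_smul, Matrix.mul_smul, Matrix.trace_smul, smul_eq_mul]
      rw [frob2_eq_fip, hl]
      refine Finset.sum_congr rfl fun r _ => ?_
      rw [hr, Finset.mul_sum]
      exact Finset.sum_congr rfl fun s _ => by ring
    rw [e]
    refine Finset.sum_congr rfl fun r _ => ?_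
    rw [Finset.sum_eq_single r]
    · rw [frob2_eq_fip]; ring
    · intro s _ hs
      rw [horth r s hs.symm, mul_zero]
    · simp
  have hup' : frob2 W ≤ S := by
    rw [hup, hS]
    exact Finset.sum_le_sum fun r _ => mul_le_of_le_one_right (sq_nonneg _) (hn r)
  by_contra hc
  push Not at hc
  nlinarith

lemma key_diag {m p : ℕ} (l : Fin m → ℝ) (hl : ∑ i, l i ^ 2 ≤ 1)
    (A : Fin p → Matrix (Fin m) (Fin m) ℝ) (hA : ∀ r, (A r).IsSymm)
    (horth : ∀ r s, r ≠ s → fip (A r) (A s) = 0) (hn : ∀ r, frob2 (A r) ≤ 1)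
    (y : Fin p → ℝ) (hy : ∀ r, 0 ≤ y r) (M : ℝ) (hM0 : 0 ≤ M) (hM : ∀ r, y r ≤ M) :
    ∑ r, y r * frob2 (Matrix.diagonal l * A r - A r * Matrix.diagonal l) ≤ ∑ r, y r + M := by
  set g : Fin m → Fin m → ℝ := fun i j => if 1 < l i - l j then (l i - l j) ^ 2 - 1 else 0 with hg
  have hg0 : ∀ i j, 0 ≤ g i j := by
    intro i j
    simp only [hg]
    split_ifs with h
    · nlinarith
    · exact le_rfl
  have hgd : ∀ i, g i i = 0 := by intro i; simp [hg]
  have hw : ∀ i j, (l i - l j) ^ 2 ≤ 1 + (g i j + g j i) := by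
    intro i j
    have a := hg0 i j
    have b := hg0 j i
    by_cases h1 : 1 < l i - l j
    · have : g i j = (l i - l j) ^ 2 - 1 := by simp [hg, h1]
      linarith
    · by_cases h2 : 1 < l j - l i
      · have : g j i = (l j - l i) ^ 2 - 1 := by simp [hg, h2]
        nlinarith
      · nlinarith
  have hc : ∀ r, frob2 (Matrix.diagonal l * A r - A r * Matrix.diagonal l)
      ≤ 1 + ∑ i, ∑ j, (g i j + g j i) * (A r i j) ^ 2 := by
    intro r
    refine le_trans ?_ (add_le_add_left (hn r) _)
    unfold frob2
    rw [← Finset.sum_add_distrib]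
    refine Finset.sum_le_sum fun i _ => ?_
    rw [← Finset.sum_add_distrib]
    refine Finset.sum_le_sum fun j _ => ?_
    rw [Matrix.sub_apply, Matrix.diagonal_mul, Matrix.mul_diagonal]
    nlinarith [mul_le_mul_of_nonneg_right (hw i j) (sq_nonneg (A r i j))]
  have hb : ∀ i j, (g i j + g j i) * ∑ r, y r * (A r i j) ^ 2 ≤ (g i j + g j i) * (M / 2) := by
    intro i j
    by_cases hij : i = j
    · subst hij; simp [hgd]
    · refine mul_le_mul_of_nonneg_left ?_ (add_nonneg (hg0 i j) (hg0 j i))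
      have h1 : ∑ r, y r * (A r i j) ^ 2 ≤ M * ∑ r, (A r i j) ^ 2 := by
        rw [Finset.mul_sum]
        exact Finset.sum_le_sum fun r _ => mul_le_mul_of_nonneg_right (hM r) (sq_nonneg _)
      have h2 := bessel_entry A hA horth hn i j hij
      nlinarith
  have hs : ∑ i, ∑ j, (g i j + g j i) ≤ 2 := by
    have h1 : ∑ i, ∑ j, g i j ≤ 1 := scalar_bound l hl
    have h2 : ∑ i, ∑ j, g j i = ∑ i, ∑ j, g i j := Finset.sum_comm
    simp only [Finset.sum_add_distrib]
    linarith
  calc ∑ r, y r * frob2 (Matrix.diagonal l * A r - A r * Matrix.diagonal l)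
      ≤ ∑ r, y r * (1 + ∑ i, ∑ j, (g i j + g j i) * (A r i j) ^ 2) :=
        Finset.sum_le_sum fun r _ => mul_le_mul_of_nonneg_left (hc r) (hy r)
    _ = ∑ r, y r + ∑ i, ∑ j, (g i j + g j i) * ∑ r, y r * (A r i j) ^ 2 := by
        simp only [mul_add, mul_one, Finset.sum_add_distrib]
        congr 1
        simp only [Finset.mul_sum]
        rw [Finset.sum_comm]
        refine Finset.sum_congr rfl fun i _ => ?_
        rw [Finset.sum_comm]
        refine Finset.sum_congr rfl fun j _ => ?_
        refine Finset.sum_congr rfl fun r _ => ?_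
        ring
    _ ≤ ∑ r, y r + ∑ i, ∑ j, (g i j + g j i) * (M / 2) := by
        exact add_le_add_right
          (Finset.sum_le_sum fun i _ => Finset.sum_le_sum fun j _ => hb i j) _
    _ = ∑ r, y r + (∑ i, ∑ j, (g i j + g j i)) * (M / 2) := by
        simp only [Finset.sum_mul]
    _ ≤ ∑ r, y r + M := by nlinarith

lemma key_bound {m p : ℕ} (Q : Matrix (Fin m) (Fin m) ℝ) (hQ : Q.IsSymm) (hQn : frob2 Q ≤ 1)
    (A : Fin p → Matrix (Fin m) (Fin m) ℝ) (hA : ∀ r, (A r).IsSymm)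
    (horth : ∀ r s, r ≠ s → fip (A r) (A s) = 0) (hn : ∀ r, frob2 (A r) ≤ 1)
    (y : Fin p → ℝ) (hy : ∀ r, 0 ≤ y r) (M : ℝ) (hM0 : 0 ≤ M) (hM : ∀ r, y r ≤ M) :
    ∑ r, y r * frob2 (Q * A r - A r * Q) ≤ ∑ r, y r + M := by
  obtain ⟨U, d, hU, -, hd⟩ := exists_diag Q hQ
  have hf : ∀ X, frob2 (U * X * Uᵀ) = frob2 X := fun X => by
    rw [frob2_eq_fip, frob2_eq_fip, fip_conj U X X hU]
  have hmul : ∀ X Y, (U * X * Uᵀ) * (U * Y * Uᵀ) = U * (X * Y) * Uᵀ := fun X Y => by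
    calc (U * X * Uᵀ) * (U * Y * Uᵀ) = U * X * (Uᵀ * U) * Y * Uᵀ := by
          simp only [Matrix.mul_assoc]
      _ = _ := by rw [hU]; simp only [Matrix.mul_assoc, Matrix.mul_one]
  have hdl : ∑ i, d i ^ 2 ≤ 1 := by
    have h1 : frob2 (Matrix.diagonal d) = ∑ i, d i ^ 2 := by
      unfold frob2
      refine Finset.sum_congr rfl fun i _ => ?_
      rw [Finset.sum_eq_single i]
      · simp
      · intro j _ hj
        simp [Matrix.diagonal_apply_ne _ hj.symm]
      · simp
    rw [← h1, ← hd, hf]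
    exact hQn
  have := key_diag d hdl (fun r => U * A r * Uᵀ)
    (fun r => by
      simp only [Matrix.IsSymm, Matrix.transpose_mul, Matrix.transpose_transpose, (hA r).eq,
        Matrix.mul_assoc])
    (fun r s hrs => by rw [fip_conj U _ _ hU]; exact horth r s hrs)
    (fun r => by rw [hf]; exact hn r) y hy M hM0 hM
  refine le_trans (le_of_eq (Finset.sum_congr rfl fun r _ => ?_)) this
  rw [← hd, hmul, hmul, ← Matrix.sub_mul, ← Matrix.mul_sub, hf]

/-- The quadratic form, maximised over the simplex. -/
lemma simplex_bound {p : ℕ} (c : Fin p → Fin p → ℝ) (hsymm : ∀ a b, c a b = c b a)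
    (hdiag : ∀ a, c a a = 0)
    (H : ∀ a (y : Fin p → ℝ) (M : ℝ), (∀ b, 0 ≤ y b) → 0 ≤ M → (∀ b, y b ≤ M) →
      ∑ b, y b * c a b ≤ ∑ b, y b + M)
    (x : Fin p → ℝ) (hx : x ∈ stdSimplex ℝ (Fin p)) : ∑ a, ∑ b, x a * x b * c a b ≤ 1 := by
  set q : (Fin p → ℝ) → ℝ := fun x => ∑ a, ∑ b, x a * x b * c a b with hq
  have hcont : Continuous q := by
    simp only [hq]; fun_prop
  obtain ⟨z, hz, hmax⟩ := (isCompact_stdSimplex ℝ (Fin p)).exists_isMaxOn ⟨x, hx⟩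
    hcont.continuousOn
  refine le_trans (hmax hx : q x ≤ q z) ?_
  have hne : Nonempty (Fin p) := by
    by_contra hc
    rw [not_nonempty_iff] at hc
    have := hz.2
    simp at this
  obtain ⟨α, hα⟩ := Finite.exists_max z
  have hz0 := hz.1
  have hz1 := hz.2
  have hαpos : 0 < z α := by
    by_contra hc
    have : ∑ i, z i ≤ 0 := Finset.sum_nonpos fun i _ => (hα i).trans (not_lt.mp hc)
    linarith
  set L := ∑ b, z b * c α b with hL
  have hL1 : L ≤ 1 := by
    have h1 := H α (Function.update z α 0) (z α)
      (fun b => by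
        by_cases h : b = α
        · subst h; simp
        · simp [Function.update_of_ne h, hz0 b]) hαpos.le
      (fun b => by
        by_cases h : b = α
        · subst h; simp [hαpos.le]
        · simp [Function.update_of_ne h, hα b])
    have h2 : ∑ b, Function.update z α 0 b * c α b = L := by
      refine Finset.sum_congr rfl fun b _ => ?_
      by_cases h : b = α
      · subst h; simp [hdiag]
      · simp [Function.update_of_ne h]
    have h3 : ∑ b, Function.update z α 0 b + z α = 1 := by
      rw [Finset.sum_update_of_mem (Finset.mem_univ α), ← hz1,
        ← Finset.add_sum_erase univ z (Finset.mem_univ α), Finset.sdiff_singleton_eq_erase]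
      ring
    linarith
  by_contra hc
  push Not at hc
  set ε := min (z α) (q z - 1) with hε
  have hε0 : 0 < ε := lt_min hαpos (by linarith)
  have hε1 : ε ≤ z α := min_le_left _ _
  have hε2 : ε ≤ q z - 1 := min_le_right _ _
  set w : Fin p → ℝ := fun b => (1 + ε) * z b - ε * (if b = α then 1 else 0) with hw
  have hwS : w ∈ stdSimplex ℝ (Fin p) := by
    constructor
    · intro b
      simp only [hw]
      split_ifs with h
      · subst h; nlinarith
      · have := hz0 b
        nlinarith
    · simp only [hw, Finset.sum_sub_distrib, ← Finset.mul_sum, hz1]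
      simp
  have hqw : q w = (1 + ε) ^ 2 * q z - 2 * ε * (1 + ε) * L := by
    have e1 : ∀ a, ∑ b, w b * c a b = (1 + ε) * (∑ b, z b * c a b) - ε * c a α := by
      intro a
      simp only [hw, sub_mul, Finset.sum_sub_distrib, Finset.mul_sum]
      congr 1
      · exact Finset.sum_congr rfl fun b _ => by ring
      · simp
    have e2 : ∀ v : Fin p → ℝ, q v = ∑ a, v a * ∑ b, v b * c a b := by
      intro v
      simp only [hq, Finset.mul_sum, mul_assoc]
    have e3 : ∀ f : Fin p → ℝ, ∑ a, w a * f a = (1 + ε) * (∑ a, z a * f a) - ε * f α := by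
      intro f
      simp only [hw, sub_mul, Finset.sum_sub_distrib, Finset.mul_sum]
      congr 1
      · exact Finset.sum_congr rfl fun b _ => by ring
      · simp
    rw [e2 w, e3, e1 α, hdiag, e2 z]
    have e4 : ∑ a, z a * ∑ b, w b * c a b
        = (1 + ε) * (∑ a, z a * ∑ b, z b * c a b) - ε * L := by
      rw [hL, Finset.mul_sum, Finset.mul_sum, ← Finset.sum_sub_distrib]
      refine Finset.sum_congr rfl fun a _ => ?_
      rw [e1, hsymm α a]
      ring
    rw [e4]
    ring
  have hle : q w ≤ q z := hmax hwS
  rw [hqw] at hle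
  have h5 : 2 * ε * (1 + ε) * L ≤ 2 * ε * (1 + ε) * 1 :=
    mul_le_mul_of_nonneg_left hL1 (by positivity)
  have h6 : ε * ((2 + ε) * q z) ≤ ε * (2 * (1 + ε)) := by nlinarith
  have h7 := le_of_mul_le_mul_left h6 hε0
  nlinarith

lemma ddvv_orth {m p : ℕ} (A : Fin p → Matrix (Fin m) (Fin m) ℝ) (hA : ∀ r, (A r).IsSymm)
    (horth : ∀ r s, r ≠ s → fip (A r) (A s) = 0) :
    ∑ r, ∑ s, frob2 (A r * A s - A s * A r) ≤ (∑ r, frob2 (A r)) ^ 2 := by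
  set N : Fin p → Matrix (Fin m) (Fin m) ℝ := fun r => (√(frob2 (A r)))⁻¹ • A r with hN
  have hNs : ∀ r, (N r).IsSymm := fun r => by
    simp only [hN, Matrix.IsSymm, Matrix.transpose_smul, (hA r).eq]
  have hNo : ∀ r s, r ≠ s → fip (N r) (N s) = 0 := by
    intro r s hrs
    have := horth r s hrs
    rw [fip_eq_trace] at this ⊢
    simp [hN, this]
  have hNn : ∀ r, frob2 (N r) ≤ 1 := by
    intro r
    simp only [hN, frob2_smul, inv_pow, Real.sq_sqrt (frob2_nonneg _)]
    exact inv_mul_le_one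
  have hAN : ∀ r, A r = √(frob2 (A r)) • N r := by
    intro r
    by_cases h : frob2 (A r) = 0
    · rw [h, frob2_eq_zero h]; simp
    · have : √(frob2 (A r)) ≠ 0 := by
        rw [Ne, Real.sqrt_eq_zero (frob2_nonneg _)]; exact h
      simp only [hN, smul_smul, mul_inv_cancel₀ this, one_smul]
  have hcom : ∀ r s, frob2 (A r * A s - A s * A r)
      = frob2 (A r) * frob2 (A s) * frob2 (N r * N s - N s * N r) := by
    intro r s
    have : A r * A s - A s * A r
        = (√(frob2 (A r)) * √(frob2 (A s))) • (N r * N s - N s * N r) := by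
      conv_lhs => rw [hAN r, hAN s]
      simp only [Matrix.smul_mul, Matrix.mul_smul, smul_smul, smul_sub]
      rw [mul_comm (√(frob2 (A s)))]
    rw [this, frob2_smul, mul_pow, Real.sq_sqrt (frob2_nonneg _), Real.sq_sqrt (frob2_nonneg _)]
  set T := ∑ r, frob2 (A r) with hT
  have hT0 : 0 ≤ T := Finset.sum_nonneg fun _ _ => frob2_nonneg _
  rcases hT0.eq_or_lt with h0 | hpos
  · have hz : ∀ r, frob2 (A r) = 0 := by
      intro r
      exact (Finset.sum_eq_zero_iff_of_nonneg fun _ _ => frob2_nonneg _).mp h0.symm r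
        (Finset.mem_univ r)
    simp only [hcom, hz, zero_mul, Finset.sum_const_zero]
    positivity
  · have := simplex_bound (fun r s => frob2 (N r * N s - N s * N r))
      (fun a b => frob2_neg_comm _ _) (fun a => by simp [frob2])
      (fun a y M hy hM0 hM => key_bound (N a) (hNs a) (hNn a) N hNs hNo hNn y hy M hM0 hM)
      (fun r => frob2 (A r) / T)
      ⟨fun r => div_nonneg (frob2_nonneg _) hT0, by
        rw [← Finset.sum_div]; exact div_self hpos.ne'⟩
    have e : ∑ r, ∑ s, frob2 (A r * A s - A s * A r)
        = T ^ 2 * ∑ r, ∑ s, frob2 (A r) / T * (frob2 (A s) / T)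
          * frob2 (N r * N s - N s * N r) := by
      simp only [Finset.mul_sum]
      refine Finset.sum_congr rfl fun r _ => Finset.sum_congr rfl fun s _ => ?_
      rw [hcom]
      field_simp
    rw [e]
    exact mul_le_of_le_one_right (sq_nonneg _) this

lemma ddvv_full {m p : ℕ} (B : Fin p → Matrix (Fin m) (Fin m) ℝ) (hB : ∀ r, (B r).IsSymm) :
    ∑ r, ∑ s, frob2 (B r * B s - B s * B r) ≤ (∑ r, frob2 (B r)) ^ 2 := by
  obtain ⟨U, d, hU, -, hd⟩ := exists_diag (Matrix.of fun r s => fip (B r) (B s)) (by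
    ext r s
    simp only [Matrix.transpose_apply, Matrix.of_apply, fip, mul_comm])
  set A : Fin p → Matrix (Fin m) (Fin m) ℝ := fun r => ∑ t, U r t • B t with hA
  have hAs : ∀ r, (A r).IsSymm := fun r => by
    simp only [hA, Matrix.IsSymm, Matrix.transpose_sum, Matrix.transpose_smul, (hB _).eq]
  have hAo : ∀ r s, r ≠ s → fip (A r) (A s) = 0 := by
    intro r s hrs
    have h1 : fip (A r) (A s)
        = (U * (Matrix.of fun r s => fip (B r) (B s)) * Uᵀ) r s := by
      simp only [fip_eq_trace, hA, Matrix.transpose_sum, Matrix.mul_sum, Matrix.sum_mul,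
        Matrix.trace_sum, Matrix.transpose_smul, Matrix.mul_smul, Matrix.smul_mul,
        Matrix.trace_smul, smul_eq_mul, Matrix.mul_apply, Matrix.of_apply,
        Matrix.transpose_apply, Finset.sum_mul]
      first
        | refine Finset.sum_congr rfl fun t _ => Finset.sum_congr rfl fun t' _ => ?_
          ring1
        | rw [Finset.sum_comm]
          refine Finset.sum_congr rfl fun t _ => Finset.sum_congr rfl fun t' _ => ?_
          ring1
    rw [h1, hd, Matrix.diagonal_apply_ne _ hrs]
  have hrot : ∀ C, ∑ r, frob2 (A r * C - C * A r) = ∑ r, frob2 (B r * C - C * B r) := by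
    intro C
    rw [← sum_frob2_rot U hU (fun t => B t * C - C * B t)]
    refine Finset.sum_congr rfl fun r _ => ?_
    simp only [hA, Finset.sum_mul, Finset.mul_sum, smul_sub, Finset.sum_sub_distrib,
      Matrix.smul_mul, Matrix.mul_smul]
  have h := ddvv_orth A hAs hAo
  have hn : ∑ r, frob2 (A r) = ∑ r, frob2 (B r) := sum_frob2_rot U hU B
  rw [hn] at h
  refine le_trans (le_of_eq ?_) h
  calc ∑ r, ∑ s, frob2 (B r * B s - B s * B r)
      = ∑ s, ∑ r, frob2 (B r * B s - B s * B r) := Finset.sum_comm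
    _ = ∑ s, ∑ r, frob2 (A r * B s - B s * A r) :=
        Finset.sum_congr rfl fun s _ => (hrot (B s)).symm
    _ = ∑ r, ∑ s, frob2 (A r * B s - B s * A r) := Finset.sum_comm
    _ = ∑ r, ∑ s, frob2 (B s * A r - A r * B s) :=
        Finset.sum_congr rfl fun r _ => Finset.sum_congr rfl fun s _ => frob2_neg_comm _ _
    _ = ∑ r, ∑ s, frob2 (A s * A r - A r * A s) :=
        Finset.sum_congr rfl fun r _ => (hrot (A r)).symm
    _ = ∑ r, ∑ s, frob2 (A r * A s - A s * A r) := Finset.sum_comm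

/-- The DDVV inequality in its algebraic matrix form (Ge–Tang, Lu):
for any family of real symmetric matrices,
(Σᵣ ‖Bᵣ‖²)² ≥ 2 Σ_{r<s} ‖[Bᵣ,Bₛ]‖². -/
theorem ddvv_matrix {m p : ℕ} (B : Fin p → Matrix (Fin m) (Fin m) ℝ)
    (hB : ∀ r, (B r).IsSymm) :
    (∑ r, frob2 (B r)) ^ 2 ≥
      2 * ∑ r, ∑ s, (if r < s then frob2 (B r * B s - B s * B r) else 0) := by
  refine le_trans (le_of_eq ?_) (ddvv_full B hB)
  rw [two_mul]
  nth_rewrite 2 [Finset.sum_comm]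
  rw [← Finset.sum_add_distrib]
  refine Finset.sum_congr rfl fun r _ => ?_
  rw [← Finset.sum_add_distrib]
  refine Finset.sum_congr rfl fun s _ => ?_
  rcases lt_trichotomy r s with h | h | h
  · simp [h, h.not_gt]
  · subst h; simp [frob2]
  · simp [h, h.not_gt, frob2_neg_comm (B s) (B r)]
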